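/- Let H be a complex Hilbert space and let C ⊆ H ⊕ H be a closed linear relation (a closed linear subspace of H ⊕ H). Then C is maximal monotone if and only if both C and its adjoint relation C* are monotone. -/

import Mathlib

open scoped ComplexInnerProductSpace

/-- A relation `C ⊆ H ⊕ H` is monotone if `Re⟪x−u, y−v⟫ ≥ 0` for all `(x,y), (u,v) ∈ C`. -/
def IsMonotoneRel {Hs : Type*} [NormedAddCommGroup Hs] [InnerProductSpace ℂ Hs]
    (C : Set (Hs × Hs)) : Prop :=
  ∀ p ∈ C, ∀ q ∈ C, 0 ≤ (⟪p.1 - q.1, p.2 - q.2⟫ : ℂ).re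

/-- A relation is maximal monotone if it is monotone and admits no proper monotone extension. -/
def IsMaximalMonotoneRel {Hs : Type*} [NormedAddCommGroup Hs] [InnerProductSpace ℂ Hs]
    (C : Set (Hs × Hs)) : Prop :=
  IsMonotoneRel C ∧ ∀ B : Set (Hs × Hs), IsMonotoneRel B → C ⊆ B → B = C

/-- The adjoint relation `C* = {(v,−u) : (u,v) ∈ C}^⊥`: a pair `(x,y)` belongs to `C*` if and
only if `⟪v,x⟫ = ⟪u,y⟫` for all `(u,v) ∈ C`. -/
def adjointRel {Hs : Type*} [NormedAddCommGroup Hs] [InnerProductSpace ℂ Hs]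
    (C : Set (Hs × Hs)) : Set (Hs × Hs) :=
  {q | ∀ p ∈ C, (⟪p.2, q.1⟫ : ℂ) = ⟪p.1, q.2⟫}

/-! If `C` is monotone, `0 ∈ C`, and `(x, y) ∈ C*` satisfies `Re⟪x, y⟫ ≤ 0`, then `(x, -y)` is
monotonically related to `C`, so maximality puts `(x, -y)` in `C`, and the definition of `C*` then
gives `Re⟪x, y⟫ = 0`. Conversely, a vector `z` orthogonal to `{u + v : (u, v) ∈ C}` yields
`(z, -z) ∈ C*`, so monotonicity of `C*` forces `z = 0` and these sums are dense. A pair `(x, y)`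
monotonically related to `C` is then approximated by those `(u, v) ∈ C` whose sum is close to
`x + y`, so it lies in `C` if `C` is closed. -/

theorem norm_le_norm_fst_add_snd_of_re_inner_nonneg {𝕜 E : Type*} [RCLike 𝕜]
    [SeminormedAddCommGroup E] [InnerProductSpace 𝕜 E] {p : E × E}
    (hp : 0 ≤ RCLike.re (inner 𝕜 p.1 p.2)) : ‖p‖ ≤ ‖p.1 + p.2‖ := by
  have hsq : ‖p.1 + p.2‖ ^ 2 = ‖p.1‖ ^ 2 + 2 * RCLike.re (inner 𝕜 p.1 p.2) + ‖p.2‖ ^ 2 :=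
    norm_add_sq p.1 p.2
  refine max_le (le_of_sq_le_sq ?_ (norm_nonneg _)) (le_of_sq_le_sq ?_ (norm_nonneg _))
  · nlinarith [sq_nonneg ‖p.2‖]
  · nlinarith [sq_nonneg ‖p.1‖]

section MonotoneRelations

variable {Hs : Type*} [NormedAddCommGroup Hs] [InnerProductSpace ℂ Hs] {C : Set (Hs × Hs)}
  {p q : Hs × Hs}

theorem IsMonotoneRel.insert (hC : IsMonotoneRel C)
    (hp : ∀ q ∈ C, 0 ≤ (⟪p.1 - q.1, p.2 - q.2⟫ : ℂ).re) : IsMonotoneRel (insert p C) := by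
  rintro q (rfl | hq) r (rfl | hr)
  · simp
  · exact hp r hr
  · rw [← inner_neg_neg, neg_sub, neg_sub]
    exact hp q hq
  · exact hC q hq r hr

theorem isMaximalMonotoneRel_iff_forall_mem :
    IsMaximalMonotoneRel C ↔
      IsMonotoneRel C ∧ ∀ p, (∀ q ∈ C, 0 ≤ (⟪p.1 - q.1, p.2 - q.2⟫ : ℂ).re) → p ∈ C := by
  refine and_congr_right fun hC ↦ ⟨fun hmax p hp ↦ ?_, fun hmem B hB hCB ↦ ?_⟩
  · exact hmax _ (hC.insert hp) (Set.subset_insert p C) ▸ Set.mem_insert p C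
  · exact Set.Subset.antisymm (fun p hp ↦ hmem p fun q hq ↦ hB p hp q (hCB hq)) hCB

theorem IsMonotoneRel.closure (hC : IsMonotoneRel C) : IsMonotoneRel (closure C) := by
  intro p hp q hq
  have hcont : Continuous (Function.uncurry fun p q : Hs × Hs ↦
      (⟪p.1 - q.1, p.2 - q.2⟫ : ℂ).re) := by
    unfold Function.uncurry
    fun_prop
  have hmem := map_mem_closure₂ hcont hp hq (u := Set.Ici 0) hC
  rwa [isClosed_Ici.closure_eq] at hmem

theorem IsMaximalMonotoneRel.isClosed (hC : IsMaximalMonotoneRel C) : IsClosed C :=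
  closure_eq_iff_isClosed.1 (hC.2 _ hC.1.closure subset_closure)

theorem IsMonotoneRel.isMaximalMonotoneRel_of_dense (hC : IsMonotoneRel C) (hclosed : IsClosed C)
    (hdense : Dense ((fun q : Hs × Hs ↦ q.1 + q.2) '' C)) : IsMaximalMonotoneRel C := by
  refine isMaximalMonotoneRel_iff_forall_mem.2 ⟨hC, fun p hp ↦ ?_⟩
  refine hclosed.closure_subset (Metric.mem_closure_iff.2 fun ε hε ↦ ?_)
  obtain ⟨_, ⟨q, hq, rfl⟩, hdist⟩ := hdense.exists_dist_lt (p.1 + p.2) hε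
  refine ⟨q, hq, ?_⟩
  calc dist p q = ‖p - q‖ := dist_eq_norm p q
    _ ≤ ‖(p.1 - q.1) + (p.2 - q.2)‖ :=
      norm_le_norm_fst_add_snd_of_re_inner_nonneg (𝕜 := ℂ) (hp q hq)
    _ = dist (p.1 + p.2) (q.1 + q.2) := by rw [dist_eq_norm, add_sub_add_comm]
    _ < ε := hdist

theorem zero_mem_adjointRel : 0 ∈ adjointRel C := fun p _ ↦ by simp

theorem sub_mem_adjointRel (hp : p ∈ adjointRel C) (hq : q ∈ adjointRel C) :
    p - q ∈ adjointRel C := fun r hr ↦ by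
  simp only [Prod.fst_sub, Prod.snd_sub, inner_sub_right, hp r hr, hq r hr]

theorem isMonotoneRel_adjointRel_iff :
    IsMonotoneRel (adjointRel C) ↔ ∀ p ∈ adjointRel C, 0 ≤ (⟪p.1, p.2⟫ : ℂ).re := by
  refine ⟨fun h p hp ↦ ?_, fun h p hp q hq ↦ h (p - q) (sub_mem_adjointRel hp hq)⟩
  simpa using h p hp 0 zero_mem_adjointRel

theorem re_inner_sub_neg_sub_of_mem_adjointRel (hp : p ∈ adjointRel C) (hq : q ∈ C) :
    (⟪p.1 - q.1, -p.2 - q.2⟫ : ℂ).re = (⟪q.1, q.2⟫ : ℂ).re - (⟪p.1, p.2⟫ : ℂ).re := by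
  have hadj : (⟪q.2, p.1⟫ : ℂ).re = (⟪q.1, p.2⟫ : ℂ).re := congrArg Complex.re (hp q hq)
  have hsymm : (⟪p.1, q.2⟫ : ℂ).re = (⟪q.2, p.1⟫ : ℂ).re := inner_re_symm (𝕜 := ℂ) p.1 q.2
  simp only [inner_sub_left, inner_sub_right, inner_neg_right, Complex.sub_re, Complex.neg_re]
  linarith

theorem IsMaximalMonotoneRel.isMonotoneRel_adjointRel (hC : IsMaximalMonotoneRel C)
    (hzero : 0 ∈ C) : IsMonotoneRel (adjointRel C) := by
  refine isMonotoneRel_adjointRel_iff.2 fun p hp ↦ ?_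
  by_contra! hneg
  have hmem : (p.1, -p.2) ∈ C := by
    refine (isMaximalMonotoneRel_iff_forall_mem.1 hC).2 _ fun q hq ↦ ?_
    have hq_nonneg : 0 ≤ (⟪q.1, q.2⟫ : ℂ).re := by simpa using hC.1 q hq 0 hzero
    rw [re_inner_sub_neg_sub_of_mem_adjointRel hp hq]
    linarith
  have hself := re_inner_sub_neg_sub_of_mem_adjointRel hp hmem
  simp only [sub_self, inner_zero_left, Complex.zero_re, inner_neg_right, Complex.neg_re] at hself
  linarith

end MonotoneRelations

section LinearRelations

variable {Hs : Type*} [NormedAddCommGroup Hs] [InnerProductSpace ℂ Hs]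
  {C : Submodule ℂ (Hs × Hs)}

theorem mk_neg_mem_adjointRel_of_mem_orthogonal {z : Hs}
    (hz : z ∈ (C.map (LinearMap.fst ℂ Hs Hs + LinearMap.snd ℂ Hs Hs))ᗮ) :
    (z, -z) ∈ adjointRel (C : Set (Hs × Hs)) := by
  intro p hp
  have horth : (⟪p.1 + p.2, z⟫ : ℂ) = 0 :=
    (Submodule.mem_orthogonal _ _).1 hz _ (Submodule.mem_map_of_mem hp)
  rw [inner_add_left] at horth
  rw [inner_neg_right]
  exact eq_neg_of_add_eq_zero_right horth

theorem dense_image_fst_add_snd_of_isMonotoneRel_adjointRel [CompleteSpace Hs]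
    (hadj : IsMonotoneRel (adjointRel (C : Set (Hs × Hs)))) :
    Dense ((fun p : Hs × Hs ↦ p.1 + p.2) '' C) := by
  suffices (C.map (LinearMap.fst ℂ Hs Hs + LinearMap.snd ℂ Hs Hs))ᗮ = ⊥ from
    Submodule.dense_iff_topologicalClosure_eq_top.2 (Submodule.topologicalClosure_eq_top_iff.2 this)
  refine (Submodule.eq_bot_iff _).2 fun z hz ↦ ?_
  have hnonneg : 0 ≤ (⟪z, -z⟫ : ℂ).re :=
    isMonotoneRel_adjointRel_iff.1 hadj _ (mk_neg_mem_adjointRel_of_mem_orthogonal hz)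
  rw [inner_neg_right, Complex.neg_re] at hnonneg
  exact (re_inner_self_nonpos (𝕜 := ℂ)).1 (neg_nonneg.1 hnonneg)

end LinearRelations

theorem closed_linear_maximal_monotone_iff_general {Hs : Type*} [NormedAddCommGroup Hs]
    [InnerProductSpace ℂ Hs] [CompleteSpace Hs] (C : Submodule ℂ (Hs × Hs)) :
    IsMaximalMonotoneRel (C : Set (Hs × Hs)) ↔
      IsClosed (C : Set (Hs × Hs)) ∧ IsMonotoneRel (C : Set (Hs × Hs)) ∧
        IsMonotoneRel (adjointRel (C : Set (Hs × Hs))) := by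
  constructor
  · intro hmax
    exact ⟨hmax.isClosed, hmax.1, hmax.isMonotoneRel_adjointRel C.zero_mem⟩
  · rintro ⟨hclosed, hmono, hadj⟩
    exact hmono.isMaximalMonotoneRel_of_dense hclosed
      (dense_image_fst_add_snd_of_isMonotoneRel_adjointRel hadj)

/-- A closed linear relation `C` on a complex Hilbert space is maximal monotone if and only if
both `C` and its adjoint relation `C*` are monotone. -/
theorem closed_linear_maximal_monotone_iff {Hs : Type*} [NormedAddCommGroup Hs]
    [InnerProductSpace ℂ Hs] [CompleteSpace Hs] (C : Submodule ℂ (Hs × Hs))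
    (hclosed : IsClosed (C : Set (Hs × Hs))) :
    IsMaximalMonotoneRel (C : Set (Hs × Hs)) ↔
      IsMonotoneRel (C : Set (Hs × Hs)) ∧ IsMonotoneRel (adjointRel (C : Set (Hs × Hs))) := by
  rw [closed_linear_maximal_monotone_iff_general, and_iff_right hclosed]
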